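/- Two countable compact Hausdorff spaces with the same Cantor-Bendixson rank and the same Cantor-Bendixson degree are homeomorphic. -/

import Mathlib

open Set

/-- The Cantor derivative of a subset `A` of a space, relative to the subspace topology:
points of `A` that do not lie in a finite relatively-open subset of `A`. -/
def sderiv {X : Type*} [TopologicalSpace X] (A : Set X) : Set X :=
  {x | x ∈ A ∧ ∀ U : Set X, IsOpen U → x ∈ U → (U ∩ A).Infinite}

/-- Iterated Cantor derivative of a subset. `cbIter A α` is `A^α`. -/
noncomputable def cbIter {X : Type*} [TopologicalSpace X] (A : Set X) (o : Ordinal) : Set X :=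
  Ordinal.limitRecOn o A (fun _ ih => sderiv ih)
    (fun o _ ih => ⋂ (β : Ordinal), ⋂ (h : β < o), ih β h)

/-- `ρ` is the Cantor-Bendixson rank of `X`. -/
def IsCBRank (X : Type*) [TopologicalSpace X] (ρ : Ordinal) : Prop :=
  cbIter (Set.univ : Set X) ρ = ∅ ∧ ∀ β < ρ, cbIter (Set.univ : Set X) β ≠ ∅

/-- A subset has small rank if its Cantor-Bendixson rank is strictly smaller than that of
the ambient space. -/
def SmallRank {X : Type u} [TopologicalSpace X] (A : Set X) : Prop :=
  ∃ σ : Ordinal.{u}, cbIter A σ = ∅ ∧ cbIter (Set.univ : Set X) σ ≠ ∅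

/-- A rough partition: a cover of `X` by open sets of maximal rank whose pairwise
intersections have small rank. -/
def IsRoughPartition {X : Type*} [TopologicalSpace X] (P : Set (Set X)) : Prop :=
  ⋃₀ P = Set.univ ∧ (∀ O ∈ P, IsOpen O ∧ ¬ SmallRank O) ∧
    ∀ O₁ ∈ P, ∀ O₂ ∈ P, O₁ ≠ O₂ → SmallRank (O₁ ∩ O₂)

/-- The Cantor-Bendixson degree of `X`. -/
noncomputable def cbDegree (X : Type*) [TopologicalSpace X] : Cardinal :=
  sSup {c : Cardinal | ∃ P : Set (Set X), IsRoughPartition P ∧ c = Cardinal.mk P}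

section CBBasics

variable {X : Type*} [TopologicalSpace X]

theorem cbI_zero (A : Set X) : cbIter A 0 = A := by
  unfold cbIter; exact Ordinal.limitRecOn_zero _ _ _

theorem cbI_succ (A : Set X) (o : Ordinal) : cbIter A (o + 1) = sderiv (cbIter A o) := by
  unfold cbIter; exact Ordinal.limitRecOn_add_one _ _ _ _

theorem cbI_limit (A : Set X) (o : Ordinal) (ho : Order.IsSuccLimit o) :
    cbIter A o = ⋂ (β : Ordinal), ⋂ (_ : β < o), cbIter A β := by
  unfold cbIter; exact Ordinal.limitRecOn_limit _ _ _ _ ho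

theorem sderiv_subset (A : Set X) : sderiv A ⊆ A := fun _ h => h.1

theorem cbI_anti (A : Set X) {α β : Ordinal} (h : α ≤ β) : cbIter A β ⊆ cbIter A α := by
  induction β using Ordinal.limitRecOn with
  | zero =>
    have : α = 0 := by simpa using h
    rw [this]
  | add_one o ih =>
    rcases h.eq_or_lt with rfl | h
    · exact subset_rfl
    · rw [cbI_succ]
      exact (sderiv_subset _).trans (ih (Order.lt_add_one_iff.1 h))
  | limit o ho ih =>
    rcases h.eq_or_lt with rfl | h
    · exact subset_rfl
    · rw [cbI_limit _ _ ho]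
      exact iInter₂_subset α h

theorem isClosed_sderiv {A : Set X} (hA : IsClosed A) : IsClosed (sderiv A) := by
  rw [← isOpen_compl_iff, isOpen_iff_forall_mem_open]
  intro x hx
  by_cases hxA : x ∈ A
  · have : ∃ U : Set X, IsOpen U ∧ x ∈ U ∧ (U ∩ A).Finite := by
      by_contra hcon
      push Not at hcon
      exact hx ⟨hxA, fun U hU hxU => hcon U hU hxU⟩
    obtain ⟨U, hU, hxU, hf⟩ := this
    exact ⟨U, fun z hz hz' => hz'.2 U hU hz hf, hU, hxU⟩
  · exact ⟨Aᶜ, fun z hz hz' => hz hz'.1, hA.isOpen_compl, hxA⟩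

theorem isClosed_cbI (α : Ordinal) : IsClosed (cbIter (univ : Set X) α) := by
  induction α using Ordinal.limitRecOn with
  | zero => rw [cbI_zero]; exact isClosed_univ
  | add_one o ih => rw [cbI_succ]; exact isClosed_sderiv ih
  | limit o ho ih =>
    rw [cbI_limit _ _ ho]
    exact isClosed_biInter fun β hβ => ih β hβ

theorem sderiv_open_inter {O A : Set X} (hO : IsOpen O) : sderiv (O ∩ A) = O ∩ sderiv A := by
  ext x
  constructor
  · rintro ⟨⟨h1, h2⟩, h⟩
    refine ⟨h1, h2, fun U hU hx => (h U hU hx).mono ?_⟩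
    intro z hz; exact ⟨hz.1, hz.2.2⟩
  · rintro ⟨h1, h2, h⟩
    refine ⟨⟨h1, h2⟩, fun U hU hx => (h (U ∩ O) (hU.inter hO) ⟨hx, h1⟩).mono ?_⟩
    intro z hz; exact ⟨hz.1.1, hz.1.2, hz.2⟩

theorem cbI_open {O : Set X} (hO : IsOpen O) (α : Ordinal) :
    cbIter O α = O ∩ cbIter (univ : Set X) α := by
  induction α using Ordinal.limitRecOn with
  | zero => simp [cbI_zero]
  | add_one o ih => rw [cbI_succ, cbI_succ, ih, sderiv_open_inter hO]
  | limit o ho ih =>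
    rw [cbI_limit _ _ ho, cbI_limit _ _ ho]
    ext x
    simp only [mem_iInter, mem_inter_iff]
    constructor
    · intro h
      refine ⟨?_, fun β hβ => ?_⟩
      · have h0 : (0 : Ordinal) < o := ho.bot_lt
        have := h 0 h0
        rwa [cbI_zero] at this
      · have := h β hβ
        rw [ih β hβ] at this
        exact this.2
    · rintro ⟨h1, h2⟩ β hβ
      rw [ih β hβ]
      exact ⟨h1, h2 β hβ⟩

/-- Compatibility with universe lifting. -/
theorem cbI_lift.{a, b, c} {X : Type c} [TopologicalSpace X] (A : Set X) (o : Ordinal.{a}) :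
    cbIter A (Ordinal.lift.{b} o) = cbIter A o := by
  induction o using Ordinal.limitRecOn with
  | zero => simp [cbI_zero]
  | add_one o ih =>
    rw [cbI_succ, ← ih, ← cbI_succ]
    simp
  | limit o ho ih =>
    have hl : Order.IsSuccLimit (Ordinal.lift.{b} o) := by
      simpa using ho
    rw [cbI_limit _ _ ho, cbI_limit _ _ hl]
    ext x
    simp only [mem_iInter]
    constructor
    · intro h β hβ
      rw [← ih β hβ]
      exact h _ (Ordinal.lift_lt.2 hβ)
    · intro h β hβ
      obtain ⟨γ, hγ, rfl⟩ := Ordinal.lt_lift_iff.1 hβ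
      rw [ih γ hγ]
      exact h γ hγ

theorem cbI_stable (A : Set X) {σ τ : Ordinal} (h : cbIter A (σ + 1) = cbIter A σ) (hτ : σ ≤ τ) :
    cbIter A τ = cbIter A σ := by
  induction τ using Ordinal.limitRecOn with
  | zero =>
    have : σ = 0 := by simpa using hτ
    rw [this]
  | add_one o ih =>
    rcases hτ.eq_or_lt with rfl | hlt
    · rfl
    · rw [cbI_succ, ih (Order.lt_add_one_iff.1 hlt), ← cbI_succ, h]
  | limit o ho ih =>
    rcases hτ.eq_or_lt with rfl | hlt
    · rfl
    · refine (cbI_anti A hτ).antisymm ?_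
      rw [cbI_limit _ _ ho]
      refine subset_iInter₂ fun β hβ => ?_
      rcases le_total σ β with h1 | h1
      · rw [ih β hβ h1]
      · exact cbI_anti A h1

end CBBasics

theorem exists_small_rank {X : Type u} [TopologicalSpace X] {ρ : Ordinal.{v}}
    (hX : IsCBRank X ρ) :
    ∃ ρ' : Ordinal.{u}, IsCBRank X ρ' ∧ Ordinal.lift.{u} ρ = Ordinal.lift.{v} ρ' := by
  have hst : ∃ σ : Ordinal.{u}, cbIter (univ : Set X) (σ + 1) = cbIter (univ : Set X) σ := by
    by_contra hcon
    push Not at hcon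
    refine not_injective_of_ordinal.{u} (fun σ : Ordinal.{u} => cbIter (univ : Set X) σ) ?_
    have key : ∀ a b : Ordinal.{u}, a < b → cbIter (univ : Set X) a ≠ cbIter (univ : Set X) b := by
      intro a b hab he
      apply hcon a
      refine (cbI_anti _ (Order.le_succ a)).antisymm ?_
      rw [he]
      exact cbI_anti _ (Order.add_one_le_of_lt hab)
    intro a b hab
    rcases lt_trichotomy a b with h | h | h
    · exact (key a b h hab).elim
    · exact h
    · exact (key b a h hab.symm).elim
  obtain ⟨σ, hσ⟩ := hst
  have hσe : cbIter (univ : Set X) σ = ∅ := by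
    have h1 : cbIter (univ : Set X) (Ordinal.lift.{v} σ + 1)
        = cbIter (univ : Set X) (Ordinal.lift.{v} σ) := by
      rw [cbI_succ, cbI_lift, ← cbI_succ, hσ]
    have h2 := cbI_stable _ h1 (le_max_left (Ordinal.lift.{v} σ) (Ordinal.lift.{u} ρ))
    rw [← cbI_lift.{u, v, u}, ← h2, ← subset_empty_iff, ← hX.1, ← cbI_lift.{v, u, u} _ ρ]
    exact cbI_anti _ (le_max_right _ _)
  let S : Set Ordinal.{u} := {τ | cbIter (univ : Set X) τ = ∅}
  have hS : S.Nonempty := ⟨σ, hσe⟩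
  have hm : sInf S ∈ S := csInf_mem hS
  refine ⟨sInf S, ⟨hm, fun β hβ h => ?_⟩, ?_⟩
  · exact notMem_of_lt_csInf hβ (OrderBot.bddBelow S) h
  · rcases lt_trichotomy (Ordinal.lift.{u} ρ) (Ordinal.lift.{v} (sInf S)) with h | h | h
    · obtain ⟨γ, hγ, he⟩ := Ordinal.lt_lift_iff.1 h
      exfalso
      refine notMem_of_lt_csInf hγ (OrderBot.bddBelow S) ?_
      change cbIter _ _ = _
      rw [← cbI_lift.{u, v, u}, he, cbI_lift, hX.1]
    · exact h
    · obtain ⟨γ, hγ, he⟩ := Ordinal.lt_lift_iff.1 h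
      exfalso
      refine hX.2 γ hγ ?_
      rw [← cbI_lift.{v, u, u}, he, cbI_lift]
      exact hm

section Degree

variable {X : Type u} [TopologicalSpace X]

theorem finite_top [CompactSpace X] {α : Ordinal}
    (h : cbIter (univ : Set X) (α + 1) = ∅) : (cbIter (univ : Set X) α).Finite := by
  have hc : IsCompact (cbIter (univ : Set X) α) := (isClosed_cbI α).isCompact
  rw [cbI_succ] at h
  have : ((cbIter (univ : Set X) α) ∩ (cbIter (univ : Set X) α)).Finite := by
    refine hc.induction_on (p := fun S => (S ∩ cbIter (univ : Set X) α).Finite) (by simp)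
      (fun s t hst ht => ht.subset (inter_subset_inter_left _ hst))
      (fun s t hs ht => by rw [union_inter_distrib_right]; exact hs.union ht) ?_
    intro x hx
    have : ∃ U : Set X, IsOpen U ∧ x ∈ U ∧ (U ∩ cbIter (univ : Set X) α).Finite := by
      by_contra hcon
      push Not at hcon
      have : x ∈ sderiv (cbIter (univ : Set X) α) := ⟨hx, fun U hU hxU => hcon U hU hxU⟩
      rw [h] at this
      exact this
    obtain ⟨U, hU, hxU, hf⟩ := this
    exact ⟨U, mem_nhdsWithin_of_mem_nhds (hU.mem_nhds hxU), hf⟩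
  simpa using this

theorem rank_zero_or_succ [CompactSpace X] {ρ : Ordinal} (h : IsCBRank X ρ) :
    ρ = 0 ∨ ∃ α, ρ = α + 1 := by
  rcases Ordinal.zero_or_succ_or_isSuccLimit ρ with h0 | ⟨α, h1⟩ | hl
  · exact Or.inl h0
  · exact Or.inr ⟨α, h1.symm⟩
  · exfalso
    have h1 := h.1
    rw [cbI_limit _ _ hl] at h1
    have : Nonempty (Iio ρ) := ⟨⟨0, hl.bot_lt⟩⟩
    have h2 : (univ : Set X) ∩ ⋂ (β : Iio ρ), cbIter (univ : Set X) β.1 = ∅ := by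
      rw [univ_inter, ← subset_empty_iff, ← h1]
      intro x hx
      simp only [mem_iInter] at hx ⊢
      exact fun β hβ => hx ⟨β, hβ⟩
    obtain ⟨β, hβ⟩ := isCompact_univ.elim_directed_family_closed
      (fun β : Iio ρ => cbIter (univ : Set X) β.1) (fun β => isClosed_cbI _) h2
      (by
        intro a b
        rcases le_total a.1 b.1 with hab | hab
        · exact ⟨b, cbI_anti _ hab, subset_rfl⟩
        · exact ⟨a, subset_rfl, cbI_anti _ hab⟩)
    rw [univ_inter] at hβ
    exact h.2 β.1 β.2 hβ

theorem degree_eq [CompactSpace X] [T1Space X] {α : Ordinal.{u}} (h : IsCBRank X (α + 1)) :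
    cbDegree X = Cardinal.mk (cbIter (univ : Set X) α) := by
  have hfin := finite_top h.1
  have hne : cbIter (univ : Set X) α ≠ ∅ := h.2 α (Order.lt_add_one_iff.2 le_rfl)
  have hlt : ∀ σ : Ordinal.{u}, cbIter (univ : Set X) σ ≠ ∅ → σ ≤ α := by
    intro σ hσ
    by_contra hcon
    apply hσ
    rw [← subset_empty_iff, ← h.1]
    exact cbI_anti _ (Order.add_one_le_of_lt (not_le.1 hcon))
  have hsmall : ∀ O : Set X, IsOpen O → (SmallRank O ↔ O ∩ cbIter (univ : Set X) α = ∅) := by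
    intro O hO
    constructor
    · rintro ⟨σ, h1, h2⟩
      rw [cbI_open hO] at h1
      rw [← subset_empty_iff, ← h1]
      exact inter_subset_inter_right _ (cbI_anti _ (hlt σ h2))
    · intro h1
      exact ⟨α, by rw [cbI_open hO, h1], hne⟩
  unfold cbDegree
  apply IsGreatest.csSup_eq
  constructor
  · let O : cbIter (univ : Set X) α → Set X := fun p => (cbIter (univ : Set X) α \ {p.1})ᶜ
    have hO : ∀ p, IsOpen (O p) := fun p => (hfin.subset sdiff_subset).isClosed.isOpen_compl
    have hpp : ∀ p, p.1 ∈ O p := fun p => by simp [O]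
    have hpq : ∀ p q, p.1 ∈ O q → p = q := fun p q hp => by
      have : p.1 = q.1 := by simpa [O] using hp
      exact Subtype.ext this
    have hinj : Function.Injective O := by
      intro p q hpq'
      apply hpq
      rw [← hpq']
      exact hpp p
    refine ⟨range O, ⟨?_, ?_, ?_⟩, ?_⟩
    · rw [sUnion_range, eq_univ_iff_forall]
      intro z
      rw [mem_iUnion]
      by_cases hz : z ∈ cbIter (univ : Set X) α
      · exact ⟨⟨z, hz⟩, hpp ⟨z, hz⟩⟩
      · obtain ⟨p, hp⟩ := nonempty_iff_ne_empty.2 hne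
        exact ⟨⟨p, hp⟩, fun hz' => hz hz'.1⟩
    · rintro _ ⟨p, rfl⟩
      refine ⟨hO p, ?_⟩
      rw [hsmall _ (hO p)]
      exact nonempty_iff_ne_empty.1 ⟨p.1, hpp p, p.2⟩
    · rintro _ ⟨p, rfl⟩ _ ⟨q, rfl⟩ hne'
      rw [hsmall _ ((hO p).inter (hO q)), eq_empty_iff_forall_notMem]
      rintro z ⟨⟨hz1, hz2⟩, hz⟩
      apply hne'
      rw [← hpq ⟨z, hz⟩ p hz1, ← hpq ⟨z, hz⟩ q hz2]
    · exact (Cardinal.mk_range_eq O hinj).symm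
  · rintro c ⟨P, ⟨hP1, hP2, hP3⟩, rfl⟩
    have : ∀ O : P, ∃ p : cbIter (univ : Set X) α, p.1 ∈ O.1 := by
      intro O
      obtain ⟨ho, hs⟩ := hP2 O.1 O.2
      rw [hsmall _ ho] at hs
      obtain ⟨p, hp⟩ := nonempty_iff_ne_empty.2 hs
      exact ⟨⟨p, hp.2⟩, hp.1⟩
    choose f hf using this
    apply Cardinal.mk_le_of_injective (f := f)
    intro O1 O2 he
    by_contra hcon
    have h3 := hP3 O1.1 O1.2 O2.1 O2.2 (fun h => hcon (Subtype.ext h))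
    rw [hsmall _ ((hP2 _ O1.2).1.inter (hP2 _ O2.2).1)] at h3
    have : (f O1).1 ∈ (O1.1 ∩ O2.1) ∩ cbIter (univ : Set X) α :=
      ⟨⟨hf O1, by rw [he]; exact hf O2⟩, (f O1).2⟩
    rw [h3] at this
    exact this

end Degree

section Local

/-- `x` has rank exactly `β`. -/
def RkEq {X : Type*} [TopologicalSpace X] (x : X) (β : Ordinal) : Prop :=
  x ∈ cbIter (univ : Set X) β ∧ x ∉ cbIter (univ : Set X) (β + 1)

theorem exists_rkEq {X : Type*} [TopologicalSpace X] {ρ : Ordinal} (x : X) (h : x ∉ cbIter (univ : Set X) ρ) :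
    ∃ β < ρ, RkEq x β := by
  induction ρ using Ordinal.limitRecOn with
  | zero => exact (h (by rw [cbI_zero]; trivial)).elim
  | add_one o ih =>
    by_cases ho : x ∈ cbIter (univ : Set X) o
    · exact ⟨o, Order.lt_add_one_iff.2 le_rfl, ho, h⟩
    · obtain ⟨β, hβ, h'⟩ := ih ho
      exact ⟨β, hβ.trans (Order.lt_add_one_iff.2 le_rfl), h'⟩
  | limit o ho ih =>
    rw [cbI_limit _ _ ho] at h
    simp only [mem_iInter, not_forall] at h
    obtain ⟨β, hβ, h⟩ := h
    obtain ⟨γ, hγ, h'⟩ := ih β hβ h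
    exact ⟨γ, hγ.trans hβ, h'⟩

variable {X : Type*} [TopologicalSpace X] [CompactSpace X] [T2Space X] [Countable X]

theorem exists_clopen_nhd {x : X} {U : Set X} (hU : IsOpen U) (hx : x ∈ U) :
    ∃ V : Set X, IsClopen V ∧ x ∈ V ∧ V ⊆ U := by
  obtain ⟨f, h0, h1, -⟩ := exists_continuous_zero_one_of_isClosed (isClosed_singleton (x := x))
    hU.isClosed_compl (by rw [disjoint_singleton_left]; exact fun h => h hx)
  have : ¬ (Ioo (0 : ℝ) 1 ⊆ range f) := by
    intro hs
    have hc : (Ioo (0 : ℝ) 1).Countable := (countable_range f).mono hs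
    have := Cardinal.mk_Ioo_real (zero_lt_one)
    exact absurd (Cardinal.le_aleph0_iff_set_countable.2 hc)
      (by rw [this]; exact not_le.2 Cardinal.aleph0_lt_continuum)
  rw [not_subset] at this
  obtain ⟨t, ht, htr⟩ := this
  have he : {z | f z < t} = {z | f z ≤ t} := by
    ext z
    simp only [mem_ofPred_eq]
    exact ⟨fun h => le_of_lt h, fun h => lt_of_le_of_ne h fun h' => htr ⟨z, h'⟩⟩
  refine ⟨{z | f z < t}, ⟨?_, isOpen_lt f.continuous continuous_const⟩, ?_, ?_⟩
  · rw [he]; exact isClosed_le f.continuous continuous_const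
  · have := h0 rfl
    simp only [mem_ofPred_eq, this]
    exact ht.1
  · intro z hz
    by_contra hzU
    have := h1 hzU
    simp only [mem_ofPred_eq, this] at hz
    exact absurd hz (not_lt.2 ht.2.le)

theorem rkEq_nhd {x : X} {β : Ordinal} (h : RkEq x β) {U : Set X} (hU : IsOpen U) (hx : x ∈ U) :
    ∃ V : Set X, IsClopen V ∧ V ⊆ U ∧ V ∩ cbIter (univ : Set X) β = {x} := by
  obtain ⟨h1, h2⟩ := h
  rw [cbI_succ] at h2
  have : ∃ W : Set X, IsOpen W ∧ x ∈ W ∧ (W ∩ cbIter (univ : Set X) β).Finite := by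
    by_contra hcon
    push Not at hcon
    exact h2 ⟨h1, fun U hU hxU => hcon U hU hxU⟩
  obtain ⟨W, hW, hxW, hf⟩ := this
  have hcl : IsClosed ((W ∩ cbIter (univ : Set X) β) \ {x}) := (hf.subset sdiff_subset).isClosed
  obtain ⟨V, hV, hxV, hVs⟩ := exists_clopen_nhd ((hU.inter hW).inter hcl.isOpen_compl)
    (x := x) ⟨⟨hx, hxW⟩, fun h => h.2 rfl⟩
  refine ⟨V, hV, fun z hz => (hVs hz).1.1, ?_⟩
  ext z
  constructor
  · rintro ⟨hz, hzβ⟩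
    by_contra hne
    exact (hVs hz).2 ⟨⟨(hVs hz).1.2, hzβ⟩, hne⟩
  · rintro rfl
    exact ⟨hxV, h1⟩

theorem exists_rkEq_mem {ρ : Ordinal.{w}} (hρ : cbIter (univ : Set X) ρ = ∅) {β : Ordinal.{w}} {V : Set X}
    (hV : IsOpen V) (hne : (V ∩ cbIter (univ : Set X) β).Nonempty) :
    ∃ z ∈ V, RkEq z β := by
  obtain ⟨z, hzV, hzβ⟩ := hne
  obtain ⟨γ, -, hγ⟩ := exists_rkEq (ρ := ρ) z (by rw [hρ]; exact notMem_empty _)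
  induction γ using WellFoundedLT.induction generalizing z with
  | ind γ ih =>
    rcases lt_trichotomy γ β with h | h | h
    · exact (hγ.2 (cbI_anti _ (Order.add_one_le_of_lt h) hzβ)).elim
    · exact ⟨z, hzV, h ▸ hγ⟩
    · obtain ⟨W, hW, hWV, hWz⟩ := rkEq_nhd hγ hV hzV
      have hz1 : z ∈ cbIter (univ : Set X) (β + 1) := cbI_anti _ (Order.add_one_le_of_lt h) hγ.1
      rw [cbI_succ] at hz1
      have hzW : z ∈ W := by
        have : z ∈ W ∩ cbIter (univ : Set X) γ := by rw [hWz]; rfl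
        exact this.1
      obtain ⟨w, hw, hwz⟩ := (hz1.2 W hW.isOpen hzW).exists_notMem_finite (finite_singleton z)
      have hwγ : w ∉ cbIter (univ : Set X) γ := by
        intro hcon
        apply hwz
        rw [← hWz]
        exact ⟨hw.1, hcon⟩
      obtain ⟨δ, hδ, hδ'⟩ := exists_rkEq w hwγ
      exact ih δ hδ w (hWV hw.1) hw.2 hδ'

end Local

section IsoSec

/-- Two subsets are identified by a continuous bijection (used for compact subsets). -/
def Iso {X Y : Type*} [TopologicalSpace X] [TopologicalSpace Y] (C : Set X) (D : Set Y) : Prop :=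
  ∃ g : X → Y, ContinuousOn g C ∧ BijOn g C D

theorem Iso.symm' {X Y : Type*} [TopologicalSpace X] [TopologicalSpace Y]
    [CompactSpace X] [T2Space Y] [Nonempty X] {C : Set X} {D : Set Y} (hC : IsClosed C)
    (h : Iso C D) : Iso D C := by
  obtain ⟨g, hg, hb⟩ := h
  have hinv := hb.invOn_invFunOn
  have hb' : BijOn (Function.invFunOn g C) D C := hb.symm hinv.symm
  refine ⟨Function.invFunOn g C, ?_, hb'⟩
  rw [continuousOn_iff_isClosed]
  intro t ht
  refine ⟨g '' (C ∩ t), ?_, ?_⟩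
  · exact ((hC.inter ht).isCompact.image_of_continuousOn (hg.mono inter_subset_left)).isClosed
  · ext y
    constructor
    · rintro ⟨h1, h2⟩
      exact ⟨⟨_, ⟨hb'.mapsTo h2, h1⟩, hinv.2 h2⟩, h2⟩
    · rintro ⟨⟨z, ⟨hz, hzt⟩, rfl⟩, h2⟩
      refine ⟨?_, h2⟩
      change Function.invFunOn g C (g z) ∈ t
      rw [hinv.1 hz]
      exact hzt

theorem glue {X Y : Type*} [TopologicalSpace X] [TopologicalSpace Y]
    {A A' : Set X} {B B' : Set Y} (hA : IsOpen A) (hA' : IsOpen A') (hd : Disjoint A A')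
    (hd' : Disjoint B B') {g h : X → Y} (hg : ContinuousOn g A) (hgb : BijOn g A B)
    (hh : ContinuousOn h A') (hhb : BijOn h A' B') :
    ∃ k : X → Y, ContinuousOn k (A ∪ A') ∧ BijOn k (A ∪ A') (B ∪ B') ∧ EqOn k g A := by
  classical
  have e1 : EqOn (A.piecewise g h) g A := fun z hz => piecewise_eq_of_mem _ _ _ hz
  have e2 : EqOn (A.piecewise g h) h A' := fun z hz =>
    piecewise_eq_of_notMem _ _ _ (disjoint_right.1 hd hz)
  have b1 := hgb.congr e1.symm
  have b2 := hhb.congr e2.symm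
  refine ⟨A.piecewise g h, (hg.congr e1).union_of_isOpen (hh.congr e2) hA hA', ?_, e1⟩
  refine b1.union b2 ?_
  rw [injOn_union hd]
  refine ⟨b1.injOn, b2.injOn, fun a ha b hb he => ?_⟩
  exact disjoint_left.1 hd' (b1.mapsTo ha) (he ▸ b2.mapsTo hb)

theorem Iso.union {X Y : Type*} [TopologicalSpace X] [TopologicalSpace Y]
    {A A' : Set X} {B B' : Set Y} (hA : IsOpen A) (hA' : IsOpen A') (hd : Disjoint A A')
    (hd' : Disjoint B B') (h1 : Iso A B) (h2 : Iso A' B') : Iso (A ∪ A') (B ∪ B') := by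
  obtain ⟨g, hg, hgb⟩ := h1
  obtain ⟨h, hh, hhb⟩ := h2
  obtain ⟨k, hk, hkb, -⟩ := glue hA hA' hd hd' hg hgb hh hhb
  exact ⟨k, hk, hkb⟩

theorem Iso.restrict {X Y : Type*} [TopologicalSpace X] [TopologicalSpace Y]
    [CompactSpace X] [T2Space Y] {C C' : Set X} {D : Set Y} (hC : IsClopen C) (hC' : IsClopen C')
    (hs : C' ⊆ C) (hD : IsClopen D) (h : Iso C D) : ∃ D' ⊆ D, IsClopen D' ∧ Iso C' D' := by
  obtain ⟨g, hg, hb⟩ := h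
  have cl : ∀ K ⊆ C, IsClosed K → IsClosed (g '' K) := fun K hK hc =>
    (hc.isCompact.image_of_continuousOn (hg.mono hK)).isClosed
  refine ⟨g '' C', ?_, ⟨cl C' hs hC'.isClosed, ?_⟩, g, hg.mono hs, ?_⟩
  · rw [← hb.image_eq]; exact image_mono hs
  · have : g '' C' = D \ g '' (C \ C') := by
      rw [← hb.image_eq]
      ext y
      constructor
      · rintro ⟨z, hz, rfl⟩
        refine ⟨⟨z, hs hz, rfl⟩, ?_⟩
        rintro ⟨w, hw, he⟩
        rw [hb.injOn hw.1 (hs hz) he] at hw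
        exact hw.2 hz
      · rintro ⟨⟨z, hz, rfl⟩, h2⟩
        by_contra hcon
        exact h2 ⟨z, ⟨hz, fun h => hcon ⟨z, h, rfl⟩⟩, rfl⟩
    rw [this]
    exact hD.isOpen.sdiff (cl _ sdiff_subset (hC.isClosed.sdiff hC'.isOpen))
  · exact (hb.injOn.mono hs).bijOn_image

end IsoSec

section Embed

variable {X Y : Type u} [TopologicalSpace X] [CompactSpace X] [T2Space X] [Countable X]
  [TopologicalSpace Y] [CompactSpace Y] [T2Space Y] [Countable Y]

/-- Induction hypothesis: clopen sets with a single point of top rank `β` are isomorphic. -/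
def PH (X Y : Type u) [TopologicalSpace X] [TopologicalSpace Y] (β : Ordinal.{w}) : Prop :=
  ∀ (C : Set X) (D : Set Y) (x : X) (y : Y), IsClopen C → IsClopen D →
    C ∩ cbIter (univ : Set X) β = {x} → D ∩ cbIter (univ : Set Y) β = {y} → Iso C D

theorem PH.symm' {β : Ordinal.{w}} (h : PH X Y β) : PH Y X β := by
  intro D C y x hD hC hy hx
  have : Nonempty X := ⟨x⟩
  exact (h C D x y hC hD hx hy).symm' hC.isClosed

theorem embed {ρ α : Ordinal.{w}} (hρY : cbIter (univ : Set Y) ρ = ∅)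
    (IH : ∀ β < α, PH X Y β) {y : Y} (hy : y ∈ cbIter (univ : Set Y) α)
    {C : Set X} (hC : IsClopen C) (hCα : C ∩ cbIter (univ : Set X) α = ∅)
    {V : Set Y} (hV : IsClopen V) (hyV : y ∈ V) :
    ∃ D ⊆ V, IsClopen D ∧ y ∉ D ∧ Iso C D := by
  let E : Set X → Prop := fun K => ∀ V : Set Y, IsClopen V → y ∈ V →
    ∃ D ⊆ V, IsClopen D ∧ y ∉ D ∧ Iso K D
  have hmono : ∀ K K' : Set X, IsClopen K → IsClopen K' → K' ⊆ K → E K → E K' := by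
    intro K K' hK hK' hs h V hV hyV
    obtain ⟨D, hDV, hD, hyD, hI⟩ := h V hV hyV
    obtain ⟨D', hs', hD', hI'⟩ := hI.restrict hK hK' hs hD
    exact ⟨D', hs'.trans hDV, hD', fun h => hyD (hs' h), hI'⟩
  have main : ∃ K, C ⊆ K ∧ IsClopen K ∧ E K := by
    refine hC.isClosed.isCompact.induction_on (p := fun S => ∃ K, S ⊆ K ∧ IsClopen K ∧ E K)
      ?_ ?_ ?_ ?_
    · refine ⟨∅, subset_rfl, isClopen_empty, fun V hV hyV => ⟨∅, empty_subset _, isClopen_empty,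
        notMem_empty _, fun _ => y, continuousOn_empty _, bijOn_empty _⟩⟩
    · rintro s t hst ⟨K, h1, h2⟩
      exact ⟨K, hst.trans h1, h2⟩
    · rintro s t ⟨K, h1, h2, h3⟩ ⟨L, h4, h5, h6⟩
      refine ⟨K ∪ (L \ K), ?_, h2.union (h5.diff h2), ?_⟩
      · rw [union_sdiff_self]; exact union_subset_union h1 h4
      · intro V hV hyV
        obtain ⟨D, hDV, hD, hyD, hI⟩ := h3 V hV hyV
        obtain ⟨D', hDV', hD', hyD', hI'⟩ := hmono L (L \ K) h5 (h5.diff h2) sdiff_subset h6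
          (V \ D) (hV.diff hD) ⟨hyV, hyD⟩
        refine ⟨D ∪ D', union_subset hDV (hDV'.trans sdiff_subset), hD.union hD', ?_, ?_⟩
        · rintro (h | h)
          · exact hyD h
          · exact hyD' h
        · refine hI.union h2.isOpen (h5.diff h2).isOpen disjoint_sdiff_self_right ?_ hI'
          exact disjoint_left.2 fun z hz hz' => (hDV' hz').2 hz
    · intro z hz
      have hzα : z ∉ cbIter (univ : Set X) α := by
        intro h
        have : z ∈ C ∩ cbIter (univ : Set X) α := ⟨hz, h⟩
        rw [hCα] at this
        exact this
      obtain ⟨β, hβ, hr⟩ := exists_rkEq z hzα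
      obtain ⟨K, hK, -, hKz⟩ := rkEq_nhd hr isOpen_univ (mem_univ z)
      have hzK : z ∈ K := by
        have : z ∈ K ∩ cbIter (univ : Set X) β := by rw [hKz]; rfl
        exact this.1
      refine ⟨K, mem_nhdsWithin_of_mem_nhds (hK.isOpen.mem_nhds hzK), K, subset_rfl, hK, ?_⟩
      intro V hV hyV
      obtain ⟨w, hwV, hw⟩ := exists_rkEq_mem hρY (β := β) hV.isOpen
        ⟨y, hyV, cbI_anti _ hβ.le hy⟩
      have hwy : w ≠ y := by
        rintro rfl
        exact hw.2 (cbI_anti _ (Order.add_one_le_of_lt hβ) hy)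
      obtain ⟨W, hW, hWs, hWw⟩ := rkEq_nhd hw (hV.isOpen.sdiff (isClosed_singleton (x := y)))
        ⟨hwV, hwy⟩
      exact ⟨W, hWs.trans sdiff_subset, hW, fun h => (hWs h).2 rfl,
        IH β hβ K W z w hK hW hKz hWw⟩
  obtain ⟨K, h1, h2, h3⟩ := main
  exact hmono K C h2 hC h1 h3 V hV hyV

theorem exists_exhaust {C : Set X} (hC : IsClopen C) (x : X) :
    ∃ K : ℕ → Set X, (∀ n, IsClopen (K n) ∧ K n ⊆ C ∧ x ∉ K n) ∧ ∀ z ∈ C, z ≠ x → ∃ n, z ∈ K n := by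
  have : ∀ z : X, ∃ K : Set X, (IsClopen K ∧ K ⊆ C ∧ x ∉ K) ∧ (z ∈ C → z ≠ x → z ∈ K) := by
    intro z
    by_cases hz : z ∈ C ∧ z ≠ x
    · obtain ⟨V, hV, hzV, hs⟩ := exists_clopen_nhd (hC.isOpen.sdiff (isClosed_singleton (x := x)))
        (x := z) ⟨hz.1, hz.2⟩
      exact ⟨V, ⟨hV, hs.trans sdiff_subset, fun h => (hs h).2 rfl⟩, fun _ _ => hzV⟩
    · exact ⟨∅, ⟨isClopen_empty, empty_subset _, notMem_empty _⟩, fun h1 h2 => (hz ⟨h1, h2⟩).elim⟩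
  choose K hK hK' using this
  have : Nonempty X := ⟨x⟩
  obtain ⟨e, he⟩ := exists_surjective_nat X
  refine ⟨fun n => K (e n), fun n => hK _, fun z hz hzx => ?_⟩
  obtain ⟨n, rfl⟩ := he z
  exact ⟨n, hK' _ hz hzx⟩

end Embed

section Main

variable {X Y : Type u} [TopologicalSpace X] [CompactSpace X] [T2Space X] [Countable X]
  [TopologicalSpace Y] [CompactSpace Y] [T2Space Y] [Countable Y]

/-- Partial isomorphisms in the back-and-forth construction. -/
structure Good (C : Set X) (D : Set Y) (x : X) (y : Y) (A : Set X) (B : Set Y) (g : X → Y) :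
    Prop where
  cA : IsClopen A
  cB : IsClopen B
  sA : A ⊆ C
  sB : B ⊆ D
  xA : x ∉ A
  yB : y ∉ B
  cont : ContinuousOn g A
  bij : BijOn g A B

theorem good_step {ρ α : Ordinal.{w}} (hρX : cbIter (univ : Set X) ρ = ∅)
    (hρY : cbIter (univ : Set Y) ρ = ∅)
    (IH : ∀ β < α, PH X Y β) {C : Set X} {D : Set Y} {x : X} {y : Y}
    (hC : IsClopen C) (hD : IsClopen D)
    (hx : C ∩ cbIter (univ : Set X) α = {x}) (hy : D ∩ cbIter (univ : Set Y) α = {y})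
    {A : Set X} {B : Set Y} {g : X → Y} (h : Good C D x y A B g)
    {K : Set X} (hK : IsClopen K) (hKC : K ⊆ C) (hxK : x ∉ K)
    {L : Set Y} (hL : IsClopen L) (hLD : L ⊆ D) (hyL : y ∉ L) :
    ∃ A' B' g', Good C D x y A' B' g' ∧ A ⊆ A' ∧ B ⊆ B' ∧ K ⊆ A' ∧ L ⊆ B' ∧ EqOn g' g A := by
  have hx' : x ∈ C ∩ cbIter (univ : Set X) α := by rw [hx]; rfl
  have hy' : y ∈ D ∩ cbIter (univ : Set Y) α := by rw [hy]; rfl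
  have nX : ∀ S ⊆ C, x ∉ S → S ∩ cbIter (univ : Set X) α = ∅ := by
    intro S hS hxS
    rw [eq_empty_iff_forall_notMem]
    rintro z ⟨h1, h2⟩
    have : z ∈ C ∩ cbIter (univ : Set X) α := ⟨hS h1, h2⟩
    rw [hx] at this
    obtain rfl : z = x := this
    exact hxS h1
  have nY : ∀ S ⊆ D, y ∉ S → S ∩ cbIter (univ : Set Y) α = ∅ := by
    intro S hS hyS
    rw [eq_empty_iff_forall_notMem]
    rintro z ⟨h1, h2⟩
    have : z ∈ D ∩ cbIter (univ : Set Y) α := ⟨hS h1, h2⟩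
    rw [hy] at this
    obtain rfl : z = y := this
    exact hyS h1
  -- forth
  obtain ⟨B1, hB1s, hB1, hyB1, g1, hg1, hb1⟩ := embed hρY IH hy'.2 (hK.diff h.cA)
    (nX (K \ A) (sdiff_subset.trans hKC) (fun hh => hxK hh.1)) (hD.diff h.cB) ⟨hy'.1, h.yB⟩
  obtain ⟨k, hk, hkb, hke⟩ := glue h.cA.isOpen (hK.diff h.cA).isOpen disjoint_sdiff_self_right
    (disjoint_left.2 fun z hz hz' => (hB1s hz').2 hz) h.cont h.bij hg1 hb1
  have hA2 : IsClopen (A ∪ K \ A) := h.cA.union (hK.diff h.cA)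
  have hB2 : IsClopen (B ∪ B1) := h.cB.union hB1
  have hxA2 : x ∉ A ∪ K \ A := by
    rintro (hh | hh)
    · exact h.xA hh
    · exact hxK hh.1
  have hyB2 : y ∉ B ∪ B1 := by
    rintro (hh | hh)
    · exact h.yB hh
    · exact hyB1 hh
  -- back
  obtain ⟨A1, hA1s, hA1, hxA1, hI⟩ := embed hρX (fun β hβ => (IH β hβ).symm') hx'.2 (hL.diff hB2)
    (nY (L \ (B ∪ B1)) (sdiff_subset.trans hLD) (fun hh => hyL hh.1)) (hC.diff hA2) ⟨hx'.1, hxA2⟩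
  have : Nonempty Y := ⟨y⟩
  obtain ⟨g2, hg2, hb2⟩ := hI.symm' (hL.diff hB2).isClosed
  obtain ⟨k', hk', hkb', hke'⟩ := glue hA2.isOpen hA1.isOpen
    (disjoint_left.2 fun z hz hz' => (hA1s hz').2 hz) disjoint_sdiff_self_right hk hkb hg2 hb2
  refine ⟨(A ∪ K \ A) ∪ A1, (B ∪ B1) ∪ (L \ (B ∪ B1)), k', ⟨hA2.union hA1,
    hB2.union (hL.diff hB2), ?_, ?_, ?_, ?_, hk', hkb'⟩, ?_, ?_, ?_, ?_, ?_⟩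
  · exact union_subset (union_subset h.sA (sdiff_subset.trans hKC)) (hA1s.trans sdiff_subset)
  · exact union_subset (union_subset h.sB (hB1s.trans sdiff_subset)) (sdiff_subset.trans hLD)
  · rintro (hh | hh)
    · exact hxA2 hh
    · exact hxA1 hh
  · rintro (hh | hh)
    · exact hyB2 hh
    · exact hyL hh.1
  · exact subset_union_left.trans subset_union_left
  · exact subset_union_left.trans subset_union_left
  · rw [union_sdiff_self]
    exact subset_union_right.trans subset_union_left
  · rw [union_sdiff_self]
    exact subset_union_right
  · intro z hz
    rw [hke' (Or.inl hz), hke hz]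

theorem ph_all {ρ : Ordinal.{w}} (hρX : cbIter (univ : Set X) ρ = ∅)
    (hρY : cbIter (univ : Set Y) ρ = ∅) (α : Ordinal.{w}) : PH X Y α := by
  induction α using WellFoundedLT.induction with
  | ind α IH =>
  intro C D x y hC hD hx hy
  classical
  obtain ⟨K, hK, hKu⟩ := exists_exhaust hC x
  obtain ⟨L, hL, hLu⟩ := exists_exhaust hD y
  have hx' : x ∈ C ∩ cbIter (univ : Set X) α := by rw [hx]; rfl
  have hy' : y ∈ D ∩ cbIter (univ : Set Y) α := by rw [hy]; rfl
  let S := {s : Set X × Set Y × (X → Y) // Good C D x y s.1 s.2.1 s.2.2}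
  have step : ∀ (n : ℕ) (s : S), ∃ t : S, s.1.1 ⊆ t.1.1 ∧ s.1.2.1 ⊆ t.1.2.1 ∧ K n ⊆ t.1.1 ∧
      L n ⊆ t.1.2.1 ∧ EqOn t.1.2.2 s.1.2.2 s.1.1 := by
    rintro n ⟨⟨A, B, g⟩, h⟩
    obtain ⟨A', B', g', h', hh⟩ := good_step hρX hρY IH hC hD hx hy h (hK n).1 (hK n).2.1 (hK n).2.2
      (hL n).1 (hL n).2.1 (hL n).2.2
    exact ⟨⟨⟨A', B', g'⟩, h'⟩, hh⟩
  choose nx hnx using step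
  let s0 : S := ⟨⟨∅, ∅, fun _ => y⟩, ⟨isClopen_empty, isClopen_empty, empty_subset _,
    empty_subset _, notMem_empty _, notMem_empty _, continuousOn_empty _, bijOn_empty _⟩⟩
  let s : ℕ → S := fun n => Nat.rec s0 (fun n t => nx n t) n
  have hs : ∀ n, s (n + 1) = nx n (s n) := fun n => rfl
  let A : ℕ → Set X := fun n => (s n).1.1
  let B : ℕ → Set Y := fun n => (s n).1.2.1
  let g : ℕ → X → Y := fun n => (s n).1.2.2
  have hG : ∀ n, Good C D x y (A n) (B n) (g n) := fun n => (s n).2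
  have hA1 : ∀ n, A n ⊆ A (n + 1) := fun n => (hnx n (s n)).1
  have hB1 : ∀ n, B n ⊆ B (n + 1) := fun n => (hnx n (s n)).2.1
  have hKA : ∀ n, K n ⊆ A (n + 1) := fun n => (hnx n (s n)).2.2.1
  have hLB : ∀ n, L n ⊆ B (n + 1) := fun n => (hnx n (s n)).2.2.2.1
  have hg1 : ∀ n, EqOn (g (n + 1)) (g n) (A n) := fun n => (hnx n (s n)).2.2.2.2
  have hAm : Monotone A := monotone_nat_of_le_succ hA1
  have hBm : Monotone B := monotone_nat_of_le_succ hB1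
  have hgm : ∀ m n, m ≤ n → EqOn (g n) (g m) (A m) := by
    intro m n hmn
    induction n, hmn using Nat.le_induction with
    | base => exact fun z _ => rfl
    | succ n hmn ih => exact fun z hz => (hg1 n (hAm hmn hz)).trans (ih hz)
  have hAu : ∀ z ∈ C, z ≠ x → ∃ n, z ∈ A n := fun z hz hzx => by
    obtain ⟨n, hn⟩ := hKu z hz hzx
    exact ⟨n + 1, hKA n hn⟩
  have hBu : ∀ z ∈ D, z ≠ y → ∃ n, z ∈ B n := fun z hz hzx => by
    obtain ⟨n, hn⟩ := hLu z hz hzx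
    exact ⟨n + 1, hLB n hn⟩
  let f : X → Y := fun z => if h : ∃ n, z ∈ A n then g (Nat.find h) z else y
  have hf : ∀ n, EqOn f (g n) (A n) := by
    intro n z hz
    have h : ∃ n, z ∈ A n := ⟨n, hz⟩
    have : f z = g (Nat.find h) z := dif_pos h
    rw [this]
    exact (hgm _ _ (Nat.find_min' h hz) (Nat.find_spec h)).symm
  have hfx : f x = y := dif_neg fun ⟨n, hn⟩ => (hG n).xA hn
  have hfB : ∀ n, BijOn f (A n) (B n) := fun n => (hG n).bij.congr (hf n).symm
  have hinj : InjOn f C := by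
    have aux : ∀ z ∈ C, z ≠ x → f z ≠ y := by
      intro z hz hzx he
      obtain ⟨n, hn⟩ := hAu z hz hzx
      exact (hG n).yB (he ▸ (hfB n).mapsTo hn)
    intro a ha b hb he
    by_cases hax : a = x
    · by_cases hbx : b = x
      · rw [hax, hbx]
      · rw [hax, hfx] at he
        exact (aux b hb hbx he.symm).elim
    · by_cases hbx : b = x
      · rw [hbx, hfx] at he
        exact (aux a ha hax he).elim
      · obtain ⟨n, hn⟩ := hAu a ha hax
        obtain ⟨m, hm⟩ := hAu b hb hbx
        exact (hfB (max n m)).injOn (hAm (le_max_left _ _) hn) (hAm (le_max_right _ _) hm) he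
  refine ⟨f, ?_, ?_, hinj, ?_⟩
  · intro z hz
    by_cases hzx : z = x
    · subst hzx
      rw [ContinuousWithinAt, hfx]
      intro V hV
      obtain ⟨V', hV's, hV', hyV'⟩ := mem_nhds_iff.1 hV
      have hcomp : IsCompact (D \ V') := (hD.isClosed.sdiff hV').isCompact
      obtain ⟨n, hn⟩ := hcomp.elim_directed_cover B (fun n => (hG n).cB.isOpen)
        (fun w hw => mem_iUnion.2 (hBu w hw.1 (fun he => hw.2 (he ▸ hyV')))) hBm.directed_le
      rw [Filter.mem_map, mem_nhdsWithin]
      refine ⟨(A n)ᶜ, (hG n).cA.isClosed.isOpen_compl, (hG n).xA, ?_⟩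
      rintro w ⟨hwA, hwC⟩
      apply hV's
      by_cases hwz : w = z
      · rw [hwz, hfx]; exact hyV'
      obtain ⟨m, hm⟩ := hAu w hwC hwz
      have hfD : f w ∈ D := (hG m).sB ((hfB m).mapsTo hm)
      by_contra hcon
      obtain ⟨w', hw', he⟩ := (hfB n).surjOn (hn ⟨hfD, hcon⟩)
      exact hwA (hinj ((hG n).sA hw') hwC he ▸ hw')
    · obtain ⟨n, hn⟩ := hAu z hz hzx
      have h1 : ContinuousOn f (A n) := (hG n).cont.congr (hf n)
      exact (h1.continuousAt ((hG n).cA.isOpen.mem_nhds hn)).continuousWithinAt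
  · intro z hz
    by_cases hzx : z = x
    · rw [hzx, hfx]; exact hy'.1
    · obtain ⟨n, hn⟩ := hAu z hz hzx
      exact (hG n).sB ((hfB n).mapsTo hn)
  · intro w hw
    by_cases hwy : w = y
    · exact ⟨x, hx'.1, by rw [hfx, hwy]⟩
    · obtain ⟨n, hn⟩ := hBu w hw hwy
      obtain ⟨z, hz, he⟩ := (hfB n).surjOn hn
      exact ⟨z, (hG n).sA hz, he⟩

theorem iso_of_ncard {α : Ordinal.{w}} (hX : cbIter (univ : Set X) (α + 1) = ∅)
    (hY : cbIter (univ : Set Y) (α + 1) = ∅) (n : ℕ) :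
    ∀ (C : Set X) (D : Set Y), IsClopen C → IsClopen D →
      (C ∩ cbIter (univ : Set X) α).ncard = n + 1 → (D ∩ cbIter (univ : Set Y) α).ncard = n + 1 →
      Iso C D := by
  induction n with
  | zero =>
    intro C D hC hD h1 h2
    obtain ⟨x, hx⟩ := ncard_eq_one.1 h1
    obtain ⟨y, hy⟩ := ncard_eq_one.1 h2
    exact ph_all hX hY α C D x y hC hD hx hy
  | succ n ih =>
    intro C D hC hD h1 h2
    obtain ⟨x, hxC, hx⟩ : (C ∩ cbIter (univ : Set X) α).Nonempty :=
      nonempty_of_ncard_ne_zero (by omega)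
    obtain ⟨y, hyD, hy⟩ : (D ∩ cbIter (univ : Set Y) α).Nonempty :=
      nonempty_of_ncard_ne_zero (by omega)
    obtain ⟨U, hU, hUC, hUx⟩ := rkEq_nhd (X := X) ⟨hx, by rw [hX]; exact notMem_empty _⟩
      hC.isOpen hxC
    obtain ⟨V, hV, hVD, hVy⟩ := rkEq_nhd (X := Y) ⟨hy, by rw [hY]; exact notMem_empty _⟩
      hD.isOpen hyD
    have e1 : (C \ U) ∩ cbIter (univ : Set X) α = (C ∩ cbIter (univ : Set X) α) \ {x} := by
      rw [← hUx]; ext z; simp only [mem_inter_iff, mem_sdiff]; tauto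
    have e2 : (D \ V) ∩ cbIter (univ : Set Y) α = (D ∩ cbIter (univ : Set Y) α) \ {y} := by
      rw [← hVy]; ext z; simp only [mem_inter_iff, mem_sdiff]; tauto
    have i1 := ph_all hX hY α U V x y hU hV hUx hVy
    have i2 := ih (C \ U) (D \ V) (hC.diff hU) (hD.diff hV)
      (by rw [e1, ncard_sdiff_singleton_of_mem (mem_inter hxC hx)]; omega)
      (by rw [e2, ncard_sdiff_singleton_of_mem (mem_inter hyD hy)]; omega)
    have := i1.union hU.isOpen (hC.diff hU).isOpen disjoint_sdiff_self_right
      disjoint_sdiff_self_right i2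
    rwa [union_sdiff_cancel hUC, union_sdiff_cancel hVD] at this

end Main

/-- Two countable compact Hausdorff spaces with the same Cantor-Bendixson rank and the
same Cantor-Bendixson degree are homeomorphic. -/
theorem countable_compact_T2_homeomorph_of_rank_degree (X Y : Type u) [TopologicalSpace X]
    [TopologicalSpace Y] [CompactSpace X] [CompactSpace Y] [T2Space X] [T2Space Y]
    [Countable X] [Countable Y] {ρ : Ordinal}
    (hX : IsCBRank X ρ) (hY : IsCBRank Y ρ) (hdeg : cbDegree X = cbDegree Y) :
    Nonempty (X ≃ₜ Y) := by
  obtain ⟨ρX, hX', hlX⟩ := exists_small_rank hX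
  obtain ⟨ρY, hY', hlY⟩ := exists_small_rank hY
  have he : ρX = ρY := Ordinal.lift_inj.1 (hlX.symm.trans hlY)
  subst he
  rcases rank_zero_or_succ hX' with h0 | ⟨α, rfl⟩
  · subst h0
    have h1 := hX'.1
    have h2 := hY'.1
    rw [cbI_zero, univ_eq_empty_iff] at h1 h2
    exact ⟨Homeomorph.empty⟩
  · rw [degree_eq hX', degree_eq hY'] at hdeg
    have hc : (cbIter (univ : Set X) α).ncard = (cbIter (univ : Set Y) α).ncard := by
      rw [← Nat.card_coe_set_eq, ← Nat.card_coe_set_eq, Nat.card, Nat.card, hdeg]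
    have hne : (cbIter (univ : Set X) α).Nonempty :=
      nonempty_iff_ne_empty.2 (hX'.2 α (Order.lt_add_one_iff.2 le_rfl))
    obtain ⟨n, hn⟩ : ∃ n, (cbIter (univ : Set X) α).ncard = n + 1 :=
      Nat.exists_eq_succ_of_ne_zero ((ncard_pos (finite_top hX'.1)).2 hne).ne'
    obtain ⟨g, hg, hb⟩ := iso_of_ncard hX'.1 hY'.1 n univ univ isClopen_univ isClopen_univ
      (by rw [univ_inter, hn]) (by rw [univ_inter, ← hc, hn])
    have hgc : Continuous g := continuousOn_univ.1 hg
    have hgb : Function.Bijective g := bijOn_univ.1 hb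
    exact ⟨Continuous.homeoOfEquivCompactToT2 (f := Equiv.ofBijective g hgb) hgc⟩
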